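/- arXiv:2107.00937 — 2 statements merged into one kernel-verified Lean document; each statement's English description precedes it below -/
import Mathlib

section
/- Let T and T' be two acute labeled triangles in the Euclidean plane. Then Λ(T,T') = M(T,T'), i.e. the infimum of Lipschitz constants over label-preserving homeomorphisms from T to T' equals max{‖e'₁‖/‖e₁‖, ‖e'₂‖/‖e₂‖, ‖e'₃‖/‖e₃‖, ‖h'₁‖/‖h₁‖, ‖h'₂‖/‖h₂‖, ‖h'₃‖/‖h₃‖}. Moreover the infimum is attained: there exists a label-preserving homeomorphism f : T → T' with L(f) = M(T,T'). -/
open Metric Set ENNReal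

noncomputable section

abbrev E2 := EuclideanSpace ℝ (Fin 2)

/-- The (filled) triangle with labeled vertices `v 0, v 1, v 2`. -/
def Tri (v : Fin 3 → E2) : Set E2 := convexHull ℝ (Set.range v)

/-- `edgeLen v i` is the length of the edge opposite to vertex `i`. -/
def edgeLen (v : Fin 3 → E2) (i : Fin 3) : ℝ := dist (v (i + 1)) (v (i + 2))

/-- `altLen v i` is the length of the altitude from vertex `i`. -/
def altLen (v : Fin 3 → E2) (i : Fin 3) : ℝ :=
  Metric.infDist (v i) ((affineSpan ℝ ({v (i + 1), v (i + 2)} : Set E2) : Set E2))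

/-- `ang v i` is the interior angle at vertex `i`. -/
def ang (v : Fin 3 → E2) (i : Fin 3) : ℝ :=
  EuclideanGeometry.angle (v (i + 1)) (v i) (v (i + 2))

def IsAcute (v : Fin 3 → E2) : Prop := ∀ i, ang v i < Real.pi / 2

def IsNonObtuse (v : Fin 3 → E2) : Prop := ∀ i, ang v i ≤ Real.pi / 2

def triArea (v : Fin 3 → E2) : ℝ := edgeLen v 0 * altLen v 0 / 2

/-- `f` restricts to a label-preserving homeomorphism from the triangle on `v`
onto the triangle on `v'`. -/
def IsLabelHomeo (v v' : Fin 3 → E2) (f : E2 → E2) : Prop :=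
  ContinuousOn f (Tri v) ∧ Set.BijOn f (Tri v) (Tri v') ∧
  (∃ g : E2 → E2, ContinuousOn g (Tri v') ∧ Set.InvOn g f (Tri v) (Tri v')) ∧
  ∀ i, f (v i) = v' i

/-- The Lipschitz constant `L(f)` of `f` on the triangle on `v`,
`sup {dist (f x) (f y) / dist x y : x ≠ y}`, as a value in `ℝ≥0∞`. -/
def lipConst (v : Fin 3 → E2) (f : E2 → E2) : ℝ≥0∞ :=
  ⨆ x ∈ Tri v, ⨆ y ∈ Tri v, edist (f x) (f y) / edist x y

/-- `Λ(T,T')`: infimum of Lipschitz constants of label-preserving homeomorphisms. -/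
def Lam (v v' : Fin 3 → E2) : ℝ≥0∞ :=
  ⨅ (f : E2 → E2) (_ : IsLabelHomeo v v' f), lipConst v f

/-- `M(T,T')`: the max of the six ratios of edge lengths and altitude lengths. -/
def Mdist (v v' : Fin 3 → E2) : ℝ :=
  max (max (max (edgeLen v' 0 / edgeLen v 0) (edgeLen v' 1 / edgeLen v 1))
        (edgeLen v' 2 / edgeLen v 2))
      (max (max (altLen v' 0 / altLen v 0) (altLen v' 1 / altLen v 1))
        (altLen v' 2 / altLen v 2))


lemma no_null (K : unitInterval × Circle → ℂ) (hc : Continuous K) (h0 : ∀ p, K p ≠ 0)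
    (c : ℂ) (hK0 : ∀ z, K (0, z) = c) (r : ℝ) (hK1 : ∀ z : Circle, K (1, z) = r * z) : False := by
  have cov := Complex.isCoveringMap_exp
  let H : C(unitInterval × Circle, {z : ℂ // z ≠ 0}) := ⟨fun p => ⟨K p, h0 p⟩, by fun_prop⟩
  have hcne : c ≠ 0 := by rw [← hK0 1]; exact h0 _
  let f0 : C(Circle, ℂ) := ContinuousMap.const _ (Complex.log c)
  have H0 : ∀ a, H (0, a) = (fun z : ℂ ↦ (⟨_, z.exp_ne_zero⟩ : {z : ℂ // z ≠ 0})) (f0 a) := by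
    intro a
    apply Subtype.ext
    simp [H, f0, hK0, Complex.exp_log hcne]
  let G := cov.liftHomotopy H f0 H0
  have hG : ∀ z : Circle, Complex.exp (G (1, z)) = r * z := by
    intro z
    have := congrArg Subtype.val (congrFun (cov.liftHomotopy_lifts H f0 H0) (1, z))
    have h2 : Complex.exp (G (1, z)) = K (1, z) := this
    rw [h2, hK1]
  have key : (fun t : ℝ => G (1, Circle.exp t)) = fun t : ℝ => G (1, Circle.exp 0) + t * Complex.I := by
    apply cov.eq_of_comp_eq (a := (0 : ℝ))
    · fun_prop
    · fun_prop
    · funext t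
      apply Subtype.ext
      simp [hG, Complex.exp_add]
    · simp
  have := congrFun key (2 * Real.pi)
  simp [Real.pi_ne_zero] at this

lemma Tri_basis (v : Fin 3 → E2) (hv : AffineIndependent ℝ v) :
    ∃ b : AffineBasis (Fin 3) ℝ E2, ∀ i, b i = v i := by
  refine ⟨⟨v, hv, ?_⟩, fun i => rfl⟩
  rw [hv.affineSpan_eq_top_iff_card_eq_finrank_add_one]
  simp

set_option maxHeartbeats 1000000 in
lemma bdry_map (b b' : AffineBasis (Fin 3) ℝ E2) (f g : E2 → E2)
    (hf : ContinuousOn f (Tri b)) (hb : Set.BijOn f (Tri b) (Tri b'))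
    (hg : ContinuousOn g (Tri b')) (hi : Set.InvOn g f (Tri b) (Tri b'))
    (x : E2) (hx : x ∈ Tri b) (i : Fin 3) (hxi : b.coord i x = 0) :
    ∃ j, b'.coord j (f x) = 0 := by
  by_contra! hne
  have hT : ∀ y, y ∈ Tri b ↔ ∀ i, 0 ≤ b.coord i y := by
    intro y; unfold Tri; rw [b.convexHull_eq_nonneg_coord]; rfl
  have hT' : ∀ y, y ∈ Tri b' ↔ ∀ i, 0 ≤ b'.coord i y := by
    intro y; unfold Tri; rw [b'.convexHull_eq_nonneg_coord]; rfl
  have hintr : f x ∈ interior (Tri b') := by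
    unfold Tri
    rw [b'.interior_convexHull]
    intro j
    exact lt_of_le_of_ne ((hT' _).1 (hb.mapsTo hx) j) (hne j).symm
  obtain ⟨r, hr, hball⟩ := Metric.nhds_basis_closedBall.mem_iff.1 (mem_interior_iff_mem_nhds.1 hintr)
  set c := Finset.univ.centroid ℝ b with hc
  have hcT : c ∈ Tri b := interior_subset b.centroid_mem_interior_convexHull
  have hci : b.coord i c = 1 / 3 := by
    rw [hc, b.coord_apply_centroid (Finset.mem_univ _)]; simp
  let γ : Circle → E2 := fun z => f x + r • !₂[(z : ℂ).re, (z : ℂ).im]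
  have hγc : Continuous γ := by
    have : Continuous fun z : Circle => (!₂[(z : ℂ).re, (z : ℂ).im] : E2) := by
      refine (PiLp.continuous_toLp 2 _).comp ?_
      refine continuous_pi fun i => ?_
      fin_cases i <;> simp <;> fun_prop
    fun_prop
  have hnorm : ∀ z : Circle, ‖(!₂[(z : ℂ).re, (z : ℂ).im] : E2)‖ = 1 := by
    intro z
    rw [EuclideanSpace.norm_eq]
    have := Circle.normSq_coe z
    rw [Complex.normSq_apply] at this
    simp [Fin.sum_univ_two, sq, this]
  have hγT : ∀ z, γ z ∈ Tri b' := by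
    intro z
    apply hball
    simp [γ, norm_smul, hnorm, abs_of_pos hr]
  have hγne : ∀ z, γ z ≠ f x := by
    intro z h
    have h1 : r • (!₂[(z : ℂ).re, (z : ℂ).im] : E2) = 0 := by simpa [γ] using h
    have h2 := congrArg norm h1
    rw [norm_smul, hnorm] at h2
    simp at h2
    exact hr.ne' h2
  have hgT : ∀ y ∈ Tri b', g y ∈ Tri b := by
    intro y hy
    obtain ⟨w, hw, rfl⟩ := hb.surjOn hy
    rw [hi.1 hw]; exact hw
  let P : unitInterval × Circle → E2 := fun p => c + (p.1 : ℝ) • (g (γ p.2) - c)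
  have hgγ : Continuous fun z => g (γ z) := hg.comp_continuous hγc hγT
  have hPc : Continuous P := by
    have h1 : Continuous fun p : unitInterval × Circle => g (γ p.2) := hgγ.comp continuous_snd
    have h2 : Continuous fun p : unitInterval × Circle => (p.1 : ℝ) := by fun_prop
    exact continuous_const.add (h2.smul (h1.sub continuous_const))
  have hPT : ∀ p, P p ∈ Tri b := by
    rintro ⟨t, z⟩
    exact (convex_convexHull ℝ _).add_smul_sub_mem hcT (hgT _ (hγT z)) t.2
  have hPne : ∀ p, P p ≠ x := by
    rintro ⟨t, z⟩ h
    have h1 : b.coord i (P (t, z)) = (1 - t) * (1 / 3) + t * b.coord i (g (γ z)) := by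
      have : P (t, z) = AffineMap.lineMap c (g (γ z)) (t : ℝ) := by
        simp only [P, AffineMap.lineMap_apply, vsub_eq_sub, vadd_eq_add]
        rw [add_comm]
      rw [this, AffineMap.apply_lineMap, AffineMap.lineMap_apply, hci]
      simp only [vsub_eq_sub, vadd_eq_add, smul_eq_mul]; ring
    rw [h, hxi] at h1
    have h2 := (hT _).1 (hgT _ (hγT z)) i
    have h3 := t.2.1
    have h4 := t.2.2
    have h5 : (t : ℝ) = 1 := by nlinarith [mul_nonneg h3 h2]
    have h6 : g (γ z) = x := by rw [← h]; simp [P, h5]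
    apply hγne z
    rw [← h6, hi.2 (hγT z)]
  let K : unitInterval × Circle → ℂ := fun p => ⟨(f (P p) - f x) 0, (f (P p) - f x) 1⟩
  have hfP : Continuous fun p => f (P p) := hf.comp_continuous hPc hPT
  refine no_null K ?_ ?_ ⟨(f c - f x) 0, (f c - f x) 1⟩ ?_ r ?_
  · have : K = fun p => (((f (P p) - f x) 0 : ℝ) : ℂ) + ((f (P p) - f x) 1 : ℝ) * Complex.I := by
      funext p; apply Complex.ext <;> simp [K]
    rw [this]
    have hd : Continuous fun p => f (P p) - f x := hfP.sub continuous_const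
    have h (j : Fin 2) : Continuous fun p => (f (P p) - f x) j :=
      (EuclideanSpace.proj (𝕜 := ℝ) j).continuous.comp hd
    exact (Complex.continuous_ofReal.comp (h 0)).add
      ((Complex.continuous_ofReal.comp (h 1)).mul continuous_const)
  · intro p h
    apply hPne p
    apply hb.injOn (hPT p) hx
    have h0 := congrArg Complex.re h
    have h1 := congrArg Complex.im h
    simp [K] at h0 h1
    ext j
    fin_cases j
    · simp; linarith
    · simp; linarith
  · intro z; simp [K, P]
  · intro z
    have : P (1, z) = g (γ z) := by simp [P]
    simp only [K, this, hi.2 (hγT z)]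
    apply Complex.ext <;> simp [γ]

lemma fin3_cases (i j : Fin 3) : j = i ∨ j = i + 1 ∨ j = i + 2 := by decide +revert
lemma fin3_a (i : Fin 3) : i + 1 + 1 = i + 2 := by decide +revert
lemma fin3_b (i : Fin 3) : i + 1 + 2 = i := by decide +revert
lemma fin3_c (i : Fin 3) : i + 2 + 1 = i := by decide +revert
lemma fin3_d (i : Fin 3) : i + 2 + 2 = i + 1 := by decide +revert
lemma fin3_n1 (i : Fin 3) : i + 1 ≠ i := by decide +revert
lemma fin3_n2 (i : Fin 3) : i + 2 ≠ i := by decide +revert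
lemma fin3_n3 (i : Fin 3) : i + 2 ≠ i + 1 := by decide +revert

/-- A triangle in the orthonormal frame attached to the altitude from vertex `i`. -/
structure TFrm (v : Fin 3 → E2) (i : Fin 3) (F u n : E2) (a b h : ℝ) : Prop where
  huu : inner ℝ u u = (1 : ℝ)
  hnn : inner ℝ n n = (1 : ℝ)
  hun : inner ℝ u n = (0 : ℝ)
  ha : 0 < a
  hb : 0 < b
  hh : 0 < h
  hac : a * b < h ^ 2
  e0 : v i = F + h • n
  e1 : v (i + 1) = F - a • u
  e2 : v (i + 2) = F + b • u

/-- All angles acute, in terms of inner products. -/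
def Good (v : Fin 3 → E2) : Prop := ∀ i, 0 < (inner ℝ (v (i + 1) - v i) (v (i + 2) - v i) : ℝ)

lemma exists_frm (v : Fin 3 → E2) (hv : Good v) (i : Fin 3) :
    ∃ F u n a b h, TFrm v i F u n a b h := by
  have h0 := hv i
  have h1 := hv (i + 1)
  have h2 := hv (i + 2)
  rw [fin3_a, fin3_b] at h1
  rw [fin3_c, fin3_d] at h2
  set P := v i with hP
  set A := v (i + 1) with hA
  set B := v (i + 2) with hB
  have hc : 0 < ‖B - A‖ := by
    rw [norm_pos_iff]
    intro h
    rw [h] at h1; simp at h1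
  set c := ‖B - A‖ with hcdef
  have hcc : (inner ℝ (B - A) (B - A) : ℝ) = c ^ 2 := by rw [real_inner_self_eq_norm_sq]
  set u := c⁻¹ • (B - A) with hu
  have hBA : B - A = c • u := by rw [hu, smul_smul, mul_inv_cancel₀ hc.ne', one_smul]
  have huu : (inner ℝ u u : ℝ) = 1 := by
    rw [hBA, inner_smul_left, inner_smul_right] at hcc
    simp only [RCLike.conj_to_real] at hcc
    have : c ^ 2 * (inner ℝ u u : ℝ) = c ^ 2 * 1 := by linarith
    exact mul_left_cancel₀ (by positivity) this
  set a : ℝ := inner ℝ (P - A) u with ha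
  have hapos : 0 < a := by
    rw [hBA, inner_smul_left] at h1
    rw [ha, real_inner_comm]
    simp at h1
    exact (mul_pos_iff_of_pos_left hc).1 h1
  set b := c - a with hb
  have hbpos : 0 < b := by
    have h3 : A - B = -(c • u) := by rw [← hBA]; abel
    have h4 : P - B = (P - A) - c • u := by rw [← hBA]; abel
    rw [h3, h4] at h2
    simp only [inner_neg_right, inner_sub_left, inner_smul_left, inner_smul_right, huu, ← ha] at h2
    simp at h2
    rw [hb]
    nlinarith
  set F := A + a • u with hF
  set m := P - F with hm
  have hum : (inner ℝ u m : ℝ) = 0 := by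
    have : m = (P - A) - a • u := by rw [hm, hF]; abel
    rw [this, inner_sub_right, inner_smul_right, huu, real_inner_comm, ← ha]; ring
  have hmm : a * b < ‖m‖ ^ 2 := by
    have h3 : A - P = -(m + a • u) := by rw [hm, hF]; abel
    have h4 : B - P = b • u - m := by
      rw [hm, hF, hb, sub_smul, ← hBA]; abel
    rw [h3, h4] at h0
    simp only [inner_neg_left, inner_add_left, inner_sub_right, inner_smul_left, inner_smul_right,
      huu, hum, real_inner_comm u m, RCLike.conj_to_real] at h0
    rw [← real_inner_self_eq_norm_sq]
    nlinarith
  have hmpos : 0 < ‖m‖ := by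
    rcases (norm_nonneg m).eq_or_lt with h | h
    · rw [← h] at hmm
      nlinarith [mul_pos hapos hbpos]
    · exact h
  refine ⟨F, u, ‖m‖⁻¹ • m, a, b, ‖m‖, huu, ?_, ?_, hapos, hbpos, hmpos, hmm, ?_, ?_, ?_⟩
  · rw [inner_smul_left, inner_smul_right, real_inner_self_eq_norm_sq]
    simp
    field_simp
  · rw [inner_smul_right, hum, mul_zero]
  · rw [smul_smul, mul_inv_cancel₀ hmpos.ne', one_smul, hm]; abel
  · rw [hF]; abel
  · rw [hF, hb, sub_smul, ← hBA]; abel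

section
variable {v v' : Fin 3 → E2} {i : Fin 3} {F u n : E2} {a b h : ℝ}
  {F' u' n' : E2} {a' b' h' : ℝ}

lemma TFrm.hnu (H : TFrm v i F u n a b h) : (inner ℝ n u : ℝ) = 0 := by
  rw [real_inner_comm, H.hun]

lemma TFrm.inner_comb (H : TFrm v i F u n a b h) (s t s' t' : ℝ) :
    (inner ℝ (s • u + t • n) (s' • u + t' • n) : ℝ) = s * s' + t * t' := by
  simp only [inner_add_left, inner_add_right, inner_smul_left, inner_smul_right, H.huu, H.hnn,
    H.hun, H.hnu]
  simp
  ring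

lemma TFrm.norm_comb (H : TFrm v i F u n a b h) (s t : ℝ) :
    ‖s • u + t • n‖ ^ 2 = s ^ 2 + t ^ 2 := by
  rw [← real_inner_self_eq_norm_sq, H.inner_comb]; ring

lemma TFrm.dist_comb (H : TFrm v i F u n a b h) (x y : E2) (s t : ℝ) (hxy : x - y = s • u + t • n) :
    dist x y ^ 2 = s ^ 2 + t ^ 2 := by
  rw [dist_eq_norm, hxy, H.norm_comb]

lemma TFrm.good (H : TFrm v i F u n a b h) : Good v := by
  have ha := H.ha
  have hb := H.hb
  have hh := H.hh
  have hac := H.hac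
  intro j
  rcases fin3_cases i j with rfl | rfl | rfl
  · have h1 : v (j + 1) - v j = (-a) • u + (-h) • n := by rw [H.e0, H.e1]; module
    have h2 : v (j + 2) - v j = b • u + (-h) • n := by rw [H.e0, H.e2]; module
    rw [h1, h2, H.inner_comb]; nlinarith
  · rw [fin3_a, fin3_b]
    have h1 : v (i + 2) - v (i + 1) = (a + b) • u + (0 : ℝ) • n := by rw [H.e2, H.e1]; module
    have h2 : v i - v (i + 1) = a • u + h • n := by rw [H.e0, H.e1]; module
    rw [h1, h2, H.inner_comb]; nlinarith
  · rw [fin3_c, fin3_d]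
    have h1 : v (i + 1) - v (i + 2) = (-(a + b)) • u + (0 : ℝ) • n := by rw [H.e2, H.e1]; module
    have h2 : v i - v (i + 2) = (-b) • u + h • n := by rw [H.e0, H.e2]; module
    rw [h1, h2, H.inner_comb]; nlinarith

lemma TFrm.edge0 (H : TFrm v i F u n a b h) : edgeLen v i = a + b := by
  have ha := H.ha
  have hb := H.hb
  have := H.dist_comb (v (i + 1)) (v (i + 2)) (-(a + b)) 0 (by rw [H.e1, H.e2]; module)
  unfold edgeLen
  rw [← abs_of_nonneg (dist_nonneg (x := v (i + 1)) (y := v (i + 2))),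
    ← abs_of_pos (by linarith : 0 < a + b), ← sq_eq_sq_iff_abs_eq_abs]
  linarith

lemma TFrm.edge1 (H : TFrm v i F u n a b h) : edgeLen v (i + 1) ^ 2 = b ^ 2 + h ^ 2 := by
  unfold edgeLen
  rw [fin3_a, fin3_b]
  have := H.dist_comb (v (i + 2)) (v i) b (-h) (by rw [H.e0, H.e2]; module)
  linarith

lemma TFrm.edge2 (H : TFrm v i F u n a b h) : edgeLen v (i + 2) ^ 2 = a ^ 2 + h ^ 2 := by
  unfold edgeLen
  rw [fin3_c, fin3_d]
  have := H.dist_comb (v i) (v (i + 1)) a h (by rw [H.e0, H.e1]; module)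
  linarith

lemma TFrm.foot (H : TFrm v i F u n a b h) :
    F = AffineMap.lineMap (v (i + 1)) (v (i + 2)) (a / (a + b)) := by
  have ha := H.ha
  have hb := H.hb
  have hab : a / (a + b) * (a + b) = a := by field_simp
  rw [AffineMap.lineMap_apply, H.e1, H.e2]
  simp only [vsub_eq_sub, vadd_eq_add]
  have : F + b • u - (F - a • u) = (a + b) • u := by module
  rw [this, smul_smul, hab]; module

lemma TFrm.dist_foot (H : TFrm v i F u n a b h) : dist (v i) F = h := by
  rw [H.e0, dist_eq_norm]
  have : ‖n‖ = 1 := by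
    have := H.hnn
    rw [real_inner_self_eq_norm_sq] at this
    exact (pow_eq_one_iff_of_nonneg (norm_nonneg n) two_ne_zero).1 this
  simp [norm_smul, this, H.hh.le]

lemma TFrm.alt (H : TFrm v i F u n a b h) : altLen v i = h := by
  unfold altLen
  apply le_antisymm
  · rw [← H.dist_foot]
    apply Metric.infDist_le_dist_of_mem
    rw [H.foot]
    exact AffineMap.lineMap_mem_affineSpan_pair _ _ _
  · rw [Metric.le_infDist ⟨_, left_mem_affineSpan_pair ℝ _ _⟩]
    intro y hy
    obtain ⟨r, rfl⟩ := mem_affineSpan_pair_iff_exists_lineMap_eq.1 hy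
    have := H.dist_comb (v i) (AffineMap.lineMap (v (i + 1)) (v (i + 2)) r) (a - r * (a + b)) h (by
      rw [AffineMap.lineMap_apply, H.e0, H.e1, H.e2]
      simp only [vsub_eq_sub, vadd_eq_add]
      module)
    have h2 : h ^ 2 ≤ dist (v i) (AffineMap.lineMap (v (i + 1)) (v (i + 2)) r) ^ 2 := by
      rw [this]; nlinarith [sq_nonneg (a - r * (a + b))]
    exact (pow_le_pow_iff_left₀ H.hh.le dist_nonneg two_ne_zero).1 h2
end

section
variable {v v' : Fin 3 → E2} {i : Fin 3} {F u n : E2} {a b h : ℝ}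
  {F' u' n' : E2} {a' b' h' : ℝ}

lemma TFrm.mem_tri (H : TFrm v i F u n a b h) (x : E2) :
    x ∈ Tri v ↔ ∃ s t : ℝ, x = F + s • u + t • n ∧ 0 ≤ t ∧ s * h + t * b ≤ b * h ∧
      -(s * h) + t * a ≤ a * h := by
  have ha := H.ha
  have hb := H.hb
  have hh := H.hh
  constructor
  · let S : Set E2 := {x | ∃ s t : ℝ, x = F + s • u + t • n ∧ 0 ≤ t ∧ s * h + t * b ≤ b * h ∧
      -(s * h) + t * a ≤ a * h}
    intro hx
    change x ∈ S
    refine convexHull_min (s := Set.range v) (t := S) ?_ ?_ hx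
    · rintro _ ⟨j, rfl⟩
      rcases fin3_cases i j with rfl | rfl | rfl
      · exact ⟨0, h, by rw [H.e0]; module, hh.le, by nlinarith, by nlinarith⟩
      · exact ⟨-a, 0, by rw [H.e1]; module, le_rfl, by nlinarith [mul_pos ha hh, mul_pos hb hh], by nlinarith⟩
      · exact ⟨b, 0, by rw [H.e2]; module, le_rfl, by nlinarith, by nlinarith [mul_pos ha hh, mul_pos hb hh]⟩
    · rintro x ⟨s, t, rfl, h1, h2, h3⟩ y ⟨s', t', rfl, h1', h2', h3'⟩ p q hp hq hpq
      refine ⟨p * s + q * s', p * t + q * t', ?_, by positivity, ?_, ?_⟩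
      · have : F = p • F + q • F := by rw [← add_smul, hpq, one_smul]
        nth_rewrite 3 [this]
        module
      · have e : b * h = p * (b * h) + q * (b * h) := by rw [← add_mul, hpq, one_mul]
        rw [e]
        nlinarith [mul_le_mul_of_nonneg_left h2 hp, mul_le_mul_of_nonneg_left h2' hq]
      · have e : a * h = p * (a * h) + q * (a * h) := by rw [← add_mul, hpq, one_mul]
        rw [e]
        nlinarith [mul_le_mul_of_nonneg_left h3 hp, mul_le_mul_of_nonneg_left h3' hq]
  · rintro ⟨s, t, rfl, h1, h2, h3⟩
    have hq : 0 ≤ (b - s - t * b / h) / (a + b) := by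
      apply div_nonneg _ (by linarith)
      have : (b - s - t * b / h) = (b * h - (s * h + t * b)) / h := by field_simp; ring
      rw [this]; exact div_nonneg (by linarith) hh.le
    have hr : 0 ≤ (a + s - t * a / h) / (a + b) := by
      apply div_nonneg _ (by linarith)
      have : (a + s - t * a / h) = (a * h - (-(s * h) + t * a)) / h := by field_simp; ring
      rw [this]; exact div_nonneg (by linarith) hh.le
    set q := (b - s - t * b / h) / (a + b) with hqd
    set r := (a + s - t * a / h) / (a + b) with hrd
    have hsum : t / h + q + r = 1 := by rw [hqd, hrd]; field_simp; ring
    have hs : s = - (q * a) + r * b := by rw [hqd, hrd]; field_simp; ring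
    have ht : t = t / h * h := by field_simp
    have hp : 0 ≤ t / h := by positivity
    refine mem_convexHull_of_exists_fintype ![t / h, q, r] ![v i, v (i + 1), v (i + 2)] ?_ ?_ ?_ ?_
    · intro j; fin_cases j <;> simp [hp, hq, hr]
    · simp [Fin.sum_univ_three, hsum]
    · intro j; fin_cases j <;> simp
    · simp only [Fin.sum_univ_three, Matrix.cons_val_zero, Matrix.cons_val_one, Matrix.cons_val]
      generalize t / h = p at *
      rw [H.e0, H.e1, H.e2, hs, ht]
      have : F = p • F + q • F + r • F := by rw [← add_smul, ← add_smul, hsum, one_smul]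
      nth_rewrite 4 [this]
      module

/-- piecewise linear function with slopes `k1` (left) and `k2` (right). -/
def pw (k1 k2 s : ℝ) : ℝ := k2 * max s 0 + k1 * min s 0

lemma pw_lip {k1 k2 L : ℝ} (h1 : 0 ≤ k1) (h2 : 0 ≤ k2) (h1' : k1 ≤ L) (h2' : k2 ≤ L) (s t : ℝ) :
    (pw k1 k2 s - pw k1 k2 t) ^ 2 ≤ L ^ 2 * (s - t) ^ 2 := by
  rw [← mul_pow, sq_le_sq, abs_mul, abs_of_nonneg (h1.trans h1')]
  unfold pw
  wlog hst : t ≤ s generalizing s t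
  · rw [abs_sub_comm, abs_sub_comm s t]
    exact this t s (le_of_not_ge hst)
  rw [abs_of_nonneg (sub_nonneg.2 hst), abs_le]
  rcases le_total s 0 with hs | hs <;> rcases le_total t 0 with ht | ht <;>
    simp only [hs, ht, max_eq_left, max_eq_right, min_eq_left, min_eq_right] <;>
    constructor <;> nlinarith

lemma pw_inv {k1 k2 : ℝ} (h1 : 0 < k1) (h2 : 0 < k2) (s : ℝ) :
    pw k1⁻¹ k2⁻¹ (pw k1 k2 s) = s := by
  unfold pw
  rcases le_total s 0 with hs | hs
  · simp only [hs, max_eq_right, min_eq_left, mul_zero, zero_add]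
    have : k1 * s ≤ 0 := by nlinarith
    simp only [this, max_eq_right, min_eq_left, mul_zero, zero_add]
    field_simp
  · simp only [hs, max_eq_left, min_eq_right, mul_zero, add_zero]
    have : 0 ≤ k2 * s := by positivity
    simp only [this, max_eq_left, min_eq_right, mul_zero, add_zero]
    field_simp

def mapF (F u n F' u' n' : E2) (k1 k2 k3 : ℝ) (x : E2) : E2 :=
  F' + pw k1 k2 (inner ℝ u (x - F)) • u' + (k3 * inner ℝ n (x - F)) • n'

lemma TFrm.mapF_apply (H : TFrm v i F u n a b h) (k1 k2 k3 s t : ℝ) :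
    mapF F u n F' u' n' k1 k2 k3 (F + s • u + t • n) = F' + pw k1 k2 s • u' + (k3 * t) • n' := by
  have e : F + s • u + t • n - F = s • u + t • n := by abel
  have h1 : (inner ℝ u (s • u + t • n) : ℝ) = s := by
    rw [inner_add_right, inner_smul_right, inner_smul_right, H.huu, H.hun]; ring
  have h2 : (inner ℝ n (s • u + t • n) : ℝ) = t := by
    rw [inner_add_right, inner_smul_right, inner_smul_right, H.hnu, H.hnn]; ring
  unfold mapF
  rw [e, h1, h2]

lemma mapF_cont (F u n F' u' n' : E2) (k1 k2 k3 : ℝ) : Continuous (mapF F u n F' u' n' k1 k2 k3) := by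
  unfold mapF pw
  fun_prop

lemma TFrm.bessel (H : TFrm v i F u n a b h) (x : E2) :
    (inner ℝ u x : ℝ) ^ 2 + (inner ℝ n x : ℝ) ^ 2 ≤ ‖x‖ ^ 2 := by
  set s : ℝ := inner ℝ u x with hs
  set t : ℝ := inner ℝ n x with ht
  have h1 : 0 ≤ ‖x - (s • u + t • n)‖ ^ 2 := by positivity
  rw [norm_sub_sq_real, H.norm_comb, inner_add_right, inner_smul_right, inner_smul_right,
    real_inner_comm, ← hs, real_inner_comm, ← ht] at h1
  nlinarith

lemma mapF_lip (H : TFrm v i F u n a b h) (H' : TFrm v' i F' u' n' a' b' h') {k1 k2 L : ℝ}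
    (h1 : 0 ≤ k1) (h2 : 0 ≤ k2) (h1' : k1 ≤ L) (h2' : k2 ≤ L) (x y : E2) :
    dist (mapF F u n F' u' n' k1 k2 L x) (mapF F u n F' u' n' k1 k2 L y) ≤ L * dist x y := by
  have hL := h1.trans h1'
  refine (pow_le_pow_iff_left₀ dist_nonneg (by positivity) two_ne_zero).1 ?_
  rw [H'.dist_comb _ _ (pw k1 k2 (inner ℝ u (x - F)) - pw k1 k2 (inner ℝ u (y - F)))
    (L * (inner ℝ n (x - F) - inner ℝ n (y - F))) (by unfold mapF; module)]
  have e1 := pw_lip h1 h2 h1' h2' (inner ℝ u (x - F)) (inner ℝ u (y - F))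
  have e2 := H.bessel (x - y)
  have e3 : (inner ℝ u (x - F) : ℝ) - inner ℝ u (y - F) = inner ℝ u (x - y) := by
    rw [← inner_sub_right]; congr 1; abel
  have e4 : (inner ℝ n (x - F) : ℝ) - inner ℝ n (y - F) = inner ℝ n (x - y) := by
    rw [← inner_sub_right]; congr 1; abel
  rw [e3] at e1
  rw [e4, mul_pow, mul_pow, dist_eq_norm]
  nlinarith [mul_le_mul_of_nonneg_left e2 (sq_nonneg L)]

lemma mapF_mapsTo (H : TFrm v i F u n a b h) (H' : TFrm v' i F' u' n' a' b' h') :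
    MapsTo (mapF F u n F' u' n' (a' / a) (b' / b) (h' / h)) (Tri v) (Tri v') := by
  intro x hx
  have ha := H.ha
  have hb := H.hb
  have hh := H.hh
  have ha' := H'.ha
  have hb' := H'.hb
  have hh' := H'.hh
  obtain ⟨s, t, rfl, h1, h2, h3⟩ := (H.mem_tri x).1 hx
  rw [H.mapF_apply, H'.mem_tri]
  refine ⟨_, _, rfl, by positivity, ?_, ?_⟩
  · unfold pw
    rcases le_total s 0 with hs | hs
    · simp only [hs, max_eq_right, min_eq_left, mul_zero, zero_add]
      have hth : t ≤ h := by nlinarith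
      have e1 : h' / h * t * b' ≤ b' * h' := by
        have : h' / h * t ≤ h' := by rw [div_mul_eq_mul_div, div_le_iff₀ hh]; nlinarith
        nlinarith
      have e2 : a' / a * s * h' ≤ 0 := by
        have : 0 ≤ a' / a * h' := by positivity
        nlinarith
      linarith
    · simp only [hs, max_eq_left, min_eq_right, mul_zero, add_zero]
      have : b' / b * s * h' + h' / h * t * b' = b' * h' * ((s * h + t * b) / (b * h)) := by
        field_simp
      rw [this]
      have : (s * h + t * b) / (b * h) ≤ 1 := by rw [div_le_one (by positivity)]; exact h2
      have h5 : 0 < b' * h' := by positivity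
      nlinarith
  · unfold pw
    rcases le_total s 0 with hs | hs
    · simp only [hs, max_eq_right, min_eq_left, mul_zero, zero_add]
      have : -(a' / a * s * h') + h' / h * t * a' = a' * h' * ((-(s * h) + t * a) / (a * h)) := by
        field_simp
      rw [this]
      have : (-(s * h) + t * a) / (a * h) ≤ 1 := by rw [div_le_one (by positivity)]; exact h3
      have h5 : 0 < a' * h' := by positivity
      nlinarith
    · simp only [hs, max_eq_left, min_eq_right, mul_zero, add_zero]
      have hth : t ≤ h := by nlinarith
      have e1 : h' / h * t * a' ≤ a' * h' := by
        have : h' / h * t ≤ h' := by rw [div_mul_eq_mul_div, div_le_iff₀ hh]; nlinarith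
        nlinarith
      have e2 : 0 ≤ b' / b * s * h' := by positivity
      linarith

lemma mapF_leftInv (H : TFrm v i F u n a b h) (H' : TFrm v' i F' u' n' a' b' h') :
    LeftInvOn (mapF F' u' n' F u n (a / a') (b / b') (h / h'))
      (mapF F u n F' u' n' (a' / a) (b' / b) (h' / h)) (Tri v) := by
  intro x hx
  have ha := H.ha
  have hb := H.hb
  have hh := H.hh
  have ha' := H'.ha
  have hb' := H'.hb
  have hh' := H'.hh
  obtain ⟨s, t, rfl, h1, h2, h3⟩ := (H.mem_tri x).1 hx
  rw [H.mapF_apply, H'.mapF_apply, ← inv_div a', ← inv_div b', pw_inv (by positivity) (by positivity)]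
  have : h / h' * (h' / h * t) = t := by field_simp
  rw [this]

lemma mapF_homeo (H : TFrm v i F u n a b h) (H' : TFrm v' i F' u' n' a' b' h') :
    IsLabelHomeo v v' (mapF F u n F' u' n' (a' / a) (b' / b) (h' / h)) := by
  have ha := H.ha
  have hb := H.hb
  have hh := H.hh
  have ha' := H'.ha
  have hb' := H'.hb
  have hh' := H'.hh
  have hinv : InvOn (mapF F' u' n' F u n (a / a') (b / b') (h / h'))
    (mapF F u n F' u' n' (a' / a) (b' / b) (h' / h)) (Tri v) (Tri v') :=
    ⟨mapF_leftInv H H', mapF_leftInv H' H⟩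
  refine ⟨(mapF_cont ..).continuousOn, hinv.bijOn (mapF_mapsTo H H') (mapF_mapsTo H' H),
    ⟨_, (mapF_cont ..).continuousOn, hinv⟩, ?_⟩
  intro j
  rcases fin3_cases i j with rfl | rfl | rfl
  · rw [H.e0, H'.e0]
    have : F + h • n = F + (0 : ℝ) • u + h • n := by module
    rw [this, H.mapF_apply]
    simp [pw, hh.ne']
  · rw [H.e1, H'.e1]
    have : F - a • u = F + (-a) • u + (0 : ℝ) • n := by module
    rw [this, H.mapF_apply]
    have e : min (-a) 0 = -a := min_eq_left (by linarith)
    have e2 : max (-a) 0 = 0 := max_eq_right (by linarith)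
    simp only [pw, e, e2]
    have : b' / b * 0 + a' / a * -a = -a' := by field_simp; ring
    rw [this]; module
  · rw [H.e2, H'.e2]
    have : F + b • u = F + b • u + (0 : ℝ) • n := by module
    rw [this, H.mapF_apply]
    have e : min b 0 = 0 := min_eq_right hb.le
    have e2 : max b 0 = b := max_eq_left hb.le
    simp only [pw, e, e2]
    have : b' / b * b + a' / a * 0 = b' := by field_simp; ring
    rw [this]; module

end

/-- equal altitude ratio at vertex `i`, other edges contracted -/
lemma lemmaB (v v' : Fin 3 → E2) (hv : Good v) (hv' : Good v') (i : Fin 3) (L : ℝ) (hL : 0 < L)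
    (h0 : altLen v' i = L * altLen v i)
    (h1 : edgeLen v' (i + 1) ≤ L * edgeLen v (i + 1))
    (h2 : edgeLen v' (i + 2) ≤ L * edgeLen v (i + 2)) :
    ∃ f, IsLabelHomeo v v' f ∧ ∀ x y, dist (f x) (f y) ≤ L * dist x y := by
  obtain ⟨F, u, n, a, b, h, H⟩ := exists_frm v hv i
  obtain ⟨F', u', n', a', b', h', H'⟩ := exists_frm v' hv' i
  have ha := H.ha
  have hb := H.hb
  have hh := H.hh
  have ha' := H'.ha
  have hb' := H'.hb
  have hh' := H'.hh
  rw [H.alt, H'.alt] at h0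
  have g1 : edgeLen v' (i + 1) ^ 2 ≤ (L * edgeLen v (i + 1)) ^ 2 :=
    pow_le_pow_left₀ dist_nonneg h1 2
  have g2 : edgeLen v' (i + 2) ^ 2 ≤ (L * edgeLen v (i + 2)) ^ 2 :=
    pow_le_pow_left₀ dist_nonneg h2 2
  rw [mul_pow, H.edge1, H'.edge1] at g1
  rw [mul_pow, H.edge2, H'.edge2] at g2
  have hbL : b' ≤ L * b := by
    refine (pow_le_pow_iff_left₀ hb'.le (by positivity) two_ne_zero).1 ?_
    rw [h0] at g1; nlinarith
  have haL : a' ≤ L * a := by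
    refine (pow_le_pow_iff_left₀ ha'.le (by positivity) two_ne_zero).1 ?_
    rw [h0] at g2; nlinarith
  have hk : h' / h = L := by rw [h0]; field_simp
  refine ⟨_, mapF_homeo H H', ?_⟩
  rw [hk]
  apply mapF_lip H H' (by positivity) (by positivity)
  · rw [div_le_iff₀ ha]; exact haL
  · rw [div_le_iff₀ hb]; exact hbL

lemma edge_pos {v : Fin 3 → E2} (hv : Good v) (i : Fin 3) : 0 < edgeLen v i := by
  obtain ⟨F, u, n, a, b, h, H⟩ := exists_frm v hv i
  rw [H.edge0]; linarith [H.ha, H.hb]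

lemma alt_pos {v : Fin 3 → E2} (hv : Good v) (i : Fin 3) : 0 < altLen v i := by
  obtain ⟨F, u, n, a, b, h, H⟩ := exists_frm v hv i
  rw [H.alt]; exact H.hh

lemma heron {v : Fin 3 → E2} (hv : Good v) (i : Fin 3) :
    4 * (edgeLen v i * altLen v i) ^ 2 =
      2 * (edgeLen v i ^ 2 * edgeLen v (i + 1) ^ 2 + edgeLen v (i + 1) ^ 2 * edgeLen v (i + 2) ^ 2
        + edgeLen v (i + 2) ^ 2 * edgeLen v i ^ 2)
      - (edgeLen v i ^ 2) ^ 2 - (edgeLen v (i + 1) ^ 2) ^ 2 - (edgeLen v (i + 2) ^ 2) ^ 2 := by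
  obtain ⟨F, u, n, a, b, h, H⟩ := exists_frm v hv i
  rw [H.edge1, H.edge2, H.edge0, H.alt]; ring

lemma area_eq {v : Fin 3 → E2} (hv : Good v) (i : Fin 3) :
    edgeLen v (i + 1) * altLen v (i + 1) = edgeLen v i * altLen v i := by
  have h1 := heron hv i
  have h2 := heron hv (i + 1)
  rw [fin3_a, fin3_b] at h2
  have p1 := mul_pos (edge_pos hv i) (alt_pos hv i)
  have p2 := mul_pos (edge_pos hv (i + 1)) (alt_pos hv (i + 1))
  have : (edgeLen v (i + 1) * altLen v (i + 1)) ^ 2 = (edgeLen v i * altLen v i) ^ 2 := by linarith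
  exact (pow_left_inj₀ p2.le p1.le two_ne_zero).1 this

lemma area_eq2 {v : Fin 3 → E2} (hv : Good v) (i : Fin 3) :
    edgeLen v (i + 2) * altLen v (i + 2) = edgeLen v i * altLen v i := by
  rw [← fin3_a, area_eq hv (i + 1), area_eq hv i]

lemma ineqK {x y z : ℝ} (hx : 0 < x) (hy : 0 < y) (hyz : y ≤ z) (hxz : x * z < 1) :
    (z ^ 2 + 1) * (x + y) ^ 2 ≤ (y ^ 2 + 1) * (x + z) ^ 2 := by
  have hz : 0 < z := hy.trans_le hyz
  have h1 : x * y < 1 := by nlinarith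
  have e : (y ^ 2 + 1) * (x + z) ^ 2 - (z ^ 2 + 1) * (x + y) ^ 2 =
      (z - y) * ((1 - x * z) * (x + y) + (1 - x * y) * (x + z)) := by ring
  have : 0 ≤ (z - y) * ((1 - x * z) * (x + y) + (1 - x * y) * (x + z)) := by
    apply mul_nonneg (by linarith)
    have := mul_pos (by linarith : 0 < 1 - x * z) (by linarith : 0 < x + y)
    have := mul_pos (by linarith : 0 < 1 - x * y) (by linarith : 0 < x + z)
    linarith
  linarith

lemma IsLabelHomeo.comp {v w v' : Fin 3 → E2} {f g : E2 → E2} (hg : IsLabelHomeo w v' g)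
    (hf : IsLabelHomeo v w f) : IsLabelHomeo v v' (g ∘ f) := by
  obtain ⟨c1, b1, ⟨f', c1', i1⟩, l1⟩ := hf
  obtain ⟨c2, b2, ⟨g', c2', i2⟩, l2⟩ := hg
  have m1 : MapsTo g' (Tri v') (Tri w) := by
    intro y hy
    obtain ⟨x, hx, rfl⟩ := b2.surjOn hy
    rw [i2.1 hx]; exact hx
  refine ⟨c2.comp c1 b1.mapsTo, b2.comp b1, ⟨f' ∘ g', c1'.comp c2' m1, ?_, ?_⟩, ?_⟩
  · intro x hx
    simp only [Function.comp]
    rw [i2.1 (b1.mapsTo hx), i1.1 hx]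
  · intro y hy
    simp only [Function.comp]
    rw [i1.2 (m1 hy), i2.2 hy]
  · intro i; simp [l1, l2]

/-- From the altitude comparison get the cotangent comparison. -/
lemma cot_le {c h q al c' h' q' al' b b' L : ℝ} (hL : 0 < L) (hc : 0 < c) (hh : 0 < h) (hq : 0 < q)
    (hh' : 0 < h') (hq' : 0 < q') (hb : 0 < b) (hb' : 0 < b') (hcc : c' = L * c)
    (e : q * al = c * h) (e' : q' * al' = c' * h') (q2 : q ^ 2 = b ^ 2 + h ^ 2)
    (q2' : q' ^ 2 = b' ^ 2 + h' ^ 2) (hal : al' ≤ L * al) : b / h ≤ b' / h' := by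
  have h1 : al = c * h / q := by rw [← e]; field_simp
  have h2 : al' = c' * h' / q' := by rw [← e']; field_simp
  rw [h1, h2, hcc] at hal
  have h3 : h' * q ≤ h * q' := by
    have : L * c * h' / q' ≤ (L * c * h) / q := by convert hal using 1; ring
    rw [div_le_div_iff₀ hq' hq] at this
    have hLc : 0 < L * c := by positivity
    have h5 : (L * c) * (h' * q) ≤ (L * c) * (h * q') := by linarith
    exact le_of_mul_le_mul_left h5 hLc
  have h4 : (h' * q) ^ 2 ≤ (h * q') ^ 2 := pow_le_pow_left₀ (by positivity) h3 2
  rw [mul_pow, mul_pow, q2, q2'] at h4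
  rw [div_le_div_iff₀ hh hh']
  refine (pow_le_pow_iff_left₀ (by positivity) (by positivity) two_ne_zero).1 ?_
  nlinarith

/-- The altitude over a side only depends on base and cotangent. -/
lemma alt_same {c h q al c' h' q' al' b b' L : ℝ} (hh : 0 < h) (hq : 0 < q)
    (hh' : 0 < h') (hq' : 0 < q') (hcc : c' = L * c)
    (e : q * al = c * h) (e' : q' * al' = c' * h') (q2 : q ^ 2 = b ^ 2 + h ^ 2)
    (q2' : q' ^ 2 = b' ^ 2 + h' ^ 2) (hbb : b / h = b' / h') : al' = L * al := by
  have h1 : al = c * h / q := by rw [← e]; field_simp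
  have h2 : al' = c' * h' / q' := by rw [← e']; field_simp
  have h3 : q' * h = q * h' := by
    refine (pow_left_inj₀ (by positivity) (by positivity) two_ne_zero).1 ?_
    rw [mul_pow, mul_pow, q2, q2']
    rw [div_eq_div_iff hh.ne' hh'.ne'] at hbb
    have : (b * h') ^ 2 = (b' * h) ^ 2 := by rw [hbb]
    nlinarith
  rw [h1, h2, hcc]
  field_simp
  linear_combination (-(L * c)) * h3

/-- Length comparison of the other side. -/
lemma side_le {c h q c' h' q' a b a' b' L : ℝ} (hL : 0 < L) (hh : 0 < h) (hq : 0 < q)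
    (hh' : 0 < h') (ha : 0 < a) (hb : 0 < b) (hb' : 0 < b')
    (ec : c = a + b) (ec' : c' = a' + b') (hcc : c' = L * c)
    (q2 : q ^ 2 = b ^ 2 + h ^ 2) (q2' : q' ^ 2 = b' ^ 2 + h' ^ 2) (haa : a / h = a' / h')
    (hbb : b / h ≤ b' / h') (hac : a' * b' < h' ^ 2) : q' ≤ L * q := by
  have K := ineqK (x := a / h) (y := b / h) (z := b' / h') (by positivity) (by positivity) hbb (by
    rw [haa, div_mul_div_comm, div_lt_one (by positivity)]; nlinarith)
  have e1 : a / h + b / h = c / h := by rw [ec]; ring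
  have e2 : a / h + b' / h' = c' / h' := by rw [ec', haa]; ring
  have e3 : (b' / h') ^ 2 + 1 = q' ^ 2 / h' ^ 2 := by rw [q2']; field_simp
  have e4 : (b / h) ^ 2 + 1 = q ^ 2 / h ^ 2 := by rw [q2]; field_simp
  rw [e1, e2, e3, e4, hcc] at K
  have hc : 0 < c := by linarith
  have K2 : q' ^ 2 * (c ^ 2 / (h ^ 2 * h' ^ 2)) ≤ (L * q) ^ 2 * (c ^ 2 / (h ^ 2 * h' ^ 2)) := by
    calc _ = q' ^ 2 / h' ^ 2 * (c / h) ^ 2 := by field_simp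
      _ ≤ _ := K
      _ = _ := by field_simp
  have K3 := le_of_mul_le_mul_right K2 (by positivity)
  exact le_of_sq_le_sq K3 (by positivity)

lemma lemmaA (v v' : Fin 3 → E2) (hv : Good v) (hv' : Good v') (i : Fin 3) (L : ℝ) (hL : 0 < L)
    (h0 : edgeLen v' i = L * edgeLen v i)
    (h1 : altLen v' (i + 1) ≤ L * altLen v (i + 1))
    (h2 : altLen v' (i + 2) ≤ L * altLen v (i + 2)) :
    ∃ f, IsLabelHomeo v v' f ∧ ∀ x y, dist (f x) (f y) ≤ L * dist x y := by
  obtain ⟨F, u, n, a, b, h, H⟩ := exists_frm v hv i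
  obtain ⟨F', u', n', a', b', h', H'⟩ := exists_frm v' hv' i
  have ha := H.ha
  have hb := H.hb
  have hh := H.hh
  have ha' := H'.ha
  have hb' := H'.hb
  have hh' := H'.hh
  have q2 := H.edge1
  have r2 := H.edge2
  have q2' := H'.edge1
  have r2' := H'.edge2
  have ar1 := area_eq hv i
  have ar2 := area_eq2 hv i
  have ar1' := area_eq hv' i
  have ar2' := area_eq2 hv' i
  rw [H.alt] at ar1 ar2
  rw [H'.alt] at ar1' ar2'
  have cb : b / h ≤ b' / h' := cot_le hL (edge_pos hv i) hh (edge_pos hv _) hh' (edge_pos hv' _)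
    hb hb' h0 ar1 ar1' q2 q2' h1
  have ca : a / h ≤ a' / h' := cot_le hL (edge_pos hv i) hh (edge_pos hv _) hh' (edge_pos hv' _)
    ha ha' h0 ar2 ar2' r2 r2' h2
  set c' := edgeLen v' i with hc'
  have hc'pos : 0 < c' := edge_pos hv' i
  have hx : 0 < a / h := by positivity
  have hy : 0 < b' / h' := by positivity
  have hxy1 : a' / h' * (b' / h') < 1 := by
    rw [div_mul_div_comm, div_lt_one (by positivity)]; nlinarith [H'.hac]
  have hxy : a / h * (b' / h') < 1 := by nlinarith
  set h2' := c' / (a / h + b' / h') with hh2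
  have hh2pos : 0 < h2' := by positivity
  have hsum : a / h * h2' + b' / h' * h2' = c' := by
    rw [← add_mul, hh2]; field_simp
  let w : Fin 3 → E2 := fun j => if j = i then F' + h2' • n' else
    if j = i + 1 then F' - (a / h * h2') • u' else F' + (b' / h' * h2') • u'
  have n1 : i + 1 ≠ i := fin3_n1 i
  have n2 : i + 2 ≠ i := fin3_n2 i
  have n3 : i + 2 ≠ i + 1 := fin3_n3 i
  have W : TFrm w i F' u' n' (a / h * h2') (b' / h' * h2') h2' :=
    { huu := H'.huu
      hnn := H'.hnn
      hun := H'.hun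
      ha := by positivity
      hb := by positivity
      hh := hh2pos
      hac := by
        have : 0 < h2' ^ 2 := by positivity
        nlinarith
      e0 := by simp [w]
      e1 := by simp [w]
      e2 := by simp [w, n2, n3] }
  have hw := W.good
  have wq := W.edge1
  have wr := W.edge2
  have wc := W.edge0
  have war1 := area_eq hw i
  have war2 := area_eq2 hw i
  rw [W.alt] at war1 war2
  rw [hsum] at wc
  have hwa : a / h = (a / h * h2') / h2' := by field_simp
  have hwb : (b' / h' * h2') / h2' = b' / h' := by field_simp
  have wc0 : edgeLen w i = L * edgeLen v i := by rw [wc, h0]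
  have wc1 : edgeLen v' i = 1 * edgeLen w i := by rw [wc, one_mul]
  obtain ⟨f, hf, hfl⟩ := lemmaB v w hv hw (i + 2) L hL
    (alt_same hh (edge_pos hv (i + 2)) hh2pos (edge_pos hw (i + 2)) wc0 ar2 war2 r2 wr hwa)
    (by rw [fin3_c, wc0])
    (by
      rw [fin3_d]
      exact side_le hL hh (edge_pos hv (i + 1)) hh2pos ha hb W.hb H.edge0 W.edge0 wc0 q2 wq hwa
        (by rw [hwb]; exact cb) W.hac)
  obtain ⟨g, hg, hgl⟩ := lemmaB w v' hw hv' (i + 1) 1 one_pos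
    (alt_same hh2pos (edge_pos hw (i + 1)) hh' (edge_pos hv' (i + 1)) wc1 war1 ar1' wq q2' hwb)
    (by
      rw [fin3_a]
      exact side_le one_pos hh2pos (edge_pos hw (i + 2)) hh' W.hb W.ha ha'
        (by rw [W.edge0, add_comm]) (by rw [H'.edge0, add_comm]) wc1 wr r2' hwb
        (by rw [← hwa]; exact ca) (by rw [mul_comm]; exact H'.hac))
    (by rw [fin3_b, one_mul, wc])
  refine ⟨g ∘ f, hg.comp hf, fun x y => ?_⟩
  have e1 := hgl (f x) (f y)
  have e2 := hfl x y
  simp only [Function.comp]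
  linarith

lemma good_of_acute (v : Fin 3 → E2) (hT : IsAcute v) : Good v := by
  intro i
  have h := hT i
  unfold ang EuclideanGeometry.angle at h
  simp only [vsub_eq_sub] at h
  rw [← InnerProductGeometry.cos_angle_mul_norm_mul_norm]
  have hc : 0 < Real.cos (InnerProductGeometry.angle (v (i + 1) - v i) (v (i + 2) - v i)) :=
    Real.cos_pos_of_mem_Ioo ⟨by
      linarith [InnerProductGeometry.angle_nonneg (v (i + 1) - v i) (v (i + 2) - v i),
        Real.pi_pos], h⟩
  have h1 : v (i + 1) - v i ≠ 0 := by
    intro h1; rw [h1, InnerProductGeometry.angle_zero_left] at h; exact lt_irrefl _ h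
  have h2 : v (i + 2) - v i ≠ 0 := by
    intro h1; rw [h1, InnerProductGeometry.angle_zero_right] at h; exact lt_irrefl _ h
  positivity

lemma mem_tri_coord (b : AffineBasis (Fin 3) ℝ E2) (y : E2) :
    y ∈ Tri b ↔ ∀ i, 0 ≤ b.coord i y := by
  unfold Tri; rw [b.convexHull_eq_nonneg_coord]; rfl

lemma coord_sum3 (b : AffineBasis (Fin 3) ℝ E2) (i : Fin 3) (y : E2) :
    b.coord i y + b.coord (i + 1) y + b.coord (i + 2) y = 1 := by
  have := b.sum_coord_apply_eq_one y
  rw [Fin.sum_univ_three] at this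
  fin_cases i
  · simpa using this
  · have h : b.coord 1 y + b.coord 2 y + b.coord 0 y = 1 := by linarith
    exact h
  · have h : b.coord 2 y + b.coord 0 y + b.coord 1 y = 1 := by linarith
    exact h

lemma eq_vertex (b : AffineBasis (Fin 3) ℝ E2) (j k : Fin 3) (y : E2) (hjk : j ≠ k)
    (h1 : b.coord j y = 0) (h2 : b.coord k y = 0) : ∃ l, y = b l := by
  obtain ⟨l, hl⟩ : ∃ l, ∀ m, m ≠ l → b.coord m y = 0 := by
    rcases fin3_cases j k with rfl | rfl | rfl
    · exact absurd rfl hjk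
    · refine ⟨j + 2, fun m hm => ?_⟩
      rcases fin3_cases j m with rfl | rfl | rfl
      · exact h1
      · exact h2
      · exact absurd rfl hm
    · refine ⟨j + 1, fun m hm => ?_⟩
      rcases fin3_cases j m with rfl | rfl | rfl
      · exact h1
      · exact absurd rfl hm
      · exact h2
  refine ⟨l, ?_⟩
  have hs := coord_sum3 b l y
  rw [hl _ (fin3_n1 l), hl _ (fin3_n2 l)] at hs
  refine b.ext_elem fun m => ?_
  by_cases hm : m = l
  · subst hm; simp; linarith
  · rw [hl m hm, b.coord_apply_ne hm]

lemma coord_lineMap (b : AffineBasis (Fin 3) ℝ E2) (i j k m : Fin 3) (t : ℝ) :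
    b.coord i (AffineMap.lineMap (b j) (b k) t) =
      (1 - t) * b.coord i (b j) + t * b.coord i (b k) := by
  rw [AffineMap.apply_lineMap, AffineMap.lineMap_apply]
  simp only [vsub_eq_sub, vadd_eq_add, smul_eq_mul]; ring

lemma edge_map (b b' : AffineBasis (Fin 3) ℝ E2) (f : E2 → E2)
    (H : IsLabelHomeo b b' f) (i : Fin 3) (t : ℝ) (ht : t ∈ Set.Ioo (0 : ℝ) 1) :
    b'.coord i (f (AffineMap.lineMap (b (i + 1)) (b (i + 2)) t)) = 0 := by
  obtain ⟨hf, hb, ⟨g, hg, hi⟩, hlab⟩ := H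
  set ψ : ℝ → E2 := fun t => AffineMap.lineMap (b (i + 1)) (b (i + 2)) t with hψ
  have hψc : Continuous ψ := AffineMap.lineMap_continuous
  have c0 : ∀ s, b.coord i (ψ s) = 0 := by
    intro s
    rw [hψ]; dsimp only
    rw [coord_lineMap b _ _ _ i, b.coord_apply_ne (fin3_n1 i).symm,
      b.coord_apply_ne (fin3_n2 i).symm]; ring
  have c1 : ∀ s, b.coord (i + 1) (ψ s) = 1 - s := by
    intro s
    rw [hψ]; dsimp only
    rw [coord_lineMap b _ _ _ i, b.coord_apply_eq, b.coord_apply_ne (fin3_n3 i).symm]; ring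
  have c2 : ∀ s, b.coord (i + 2) (ψ s) = s := by
    intro s
    rw [hψ]; dsimp only
    rw [coord_lineMap b _ _ _ i, b.coord_apply_eq, b.coord_apply_ne (fin3_n3 i)]; ring
  have hψT : ∀ s ∈ Set.Icc (0 : ℝ) 1, ψ s ∈ Tri b := by
    intro s hs
    rw [mem_tri_coord]
    intro m
    rcases fin3_cases i m with rfl | rfl | rfl
    · rw [c0]
    · rw [c1]; linarith [hs.2]
    · rw [c2]; exact hs.1
  have hIoo : ∀ s ∈ Set.Ioo (0 : ℝ) 1, s ∈ Set.Icc (0 : ℝ) 1 := fun s hs => ⟨hs.1.le, hs.2.le⟩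
  have hφ : ContinuousOn (fun s => f (ψ s)) (Set.Icc (0 : ℝ) 1) :=
    hf.comp hψc.continuousOn hψT
  have ex : ∀ s ∈ Set.Ioo (0 : ℝ) 1, ∃ j, b'.coord j (f (ψ s)) = 0 := fun s hs =>
    bdry_map b b' f g hf hb hg hi _ (hψT s (hIoo s hs)) i (c0 s)
  have uniq : ∀ s ∈ Set.Ioo (0 : ℝ) 1, ∀ j k, j ≠ k → b'.coord j (f (ψ s)) = 0 →
      b'.coord k (f (ψ s)) = 0 → False := by
    intro s hs j k hjk h1 h2
    obtain ⟨l, hl⟩ := eq_vertex b' j k _ hjk h1 h2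
    rw [← hlab l] at hl
    have hbl : b l ∈ Tri b := subset_convexHull ℝ _ ⟨l, rfl⟩
    have he := hb.injOn (hψT s (hIoo s hs)) hbl hl
    have e1 := c1 s
    have e2 := c2 s
    rw [he] at e1 e2
    have e0 := c0 s
    rw [he] at e0
    rw [b.coord_apply] at e0 e1 e2
    have p1 := hs.1
    have p2 := hs.2
    split_ifs at e0 e1 e2 with k1 k2 k3 <;> linarith
  obtain ⟨j, hj⟩ := ex t ht
  have hcl : ∀ k, IsClosed {y : E2 | b'.coord k y = 0} := fun k =>
    isClosed_eq (continuous_barycentric_coord b' k) continuous_const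
  have hpre : IsPreconnected ((fun s => f (ψ s)) '' Set.Ioo (0 : ℝ) 1) :=
    isPreconnected_Ioo.image _ (hφ.mono hIoo)
  have hall : ∀ s ∈ Set.Ioo (0 : ℝ) 1, b'.coord j (f (ψ s)) = 0 := by
    intro s hs
    by_contra hne
    rw [isPreconnected_closed_iff] at hpre
    obtain ⟨y, ⟨r, hr, rfl⟩, h1, h2⟩ := hpre {y | b'.coord j y = 0}
      ({y | b'.coord (j + 1) y = 0} ∪ {y | b'.coord (j + 2) y = 0}) (hcl j)
      ((hcl _).union (hcl _)) (by
        rintro _ ⟨r, hr, rfl⟩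
        obtain ⟨k, hk⟩ := ex r hr
        rcases fin3_cases j k with rfl | rfl | rfl
        · exact Or.inl hk
        · exact Or.inr (Or.inl hk)
        · exact Or.inr (Or.inr hk))
      ⟨_, ⟨t, ht, rfl⟩, hj⟩ (by
        refine ⟨_, ⟨s, hs, rfl⟩, ?_⟩
        obtain ⟨k, hk⟩ := ex s hs
        rcases fin3_cases j k with rfl | rfl | rfl
        · exact absurd hk hne
        · exact Or.inl hk
        · exact Or.inr hk)
    rcases h2 with h2 | h2
    · exact uniq r hr _ _ (fin3_n1 j).symm h1 h2
    · exact uniq r hr _ _ (fin3_n2 j).symm h1 h2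
  have hIcc : ∀ s ∈ Set.Icc (0 : ℝ) 1, b'.coord j (f (ψ s)) = 0 := by
    intro s hs
    have h1 : closure (Set.Ioo (0 : ℝ) 1) = Set.Icc 0 1 := closure_Ioo zero_ne_one
    have h2 := ContinuousOn.image_closure (f := fun s => f (ψ s)) (s := Set.Ioo (0 : ℝ) 1)
      (by rw [h1]; exact hφ)
    rw [h1] at h2
    have h3 : closure ((fun s => f (ψ s)) '' Set.Ioo (0 : ℝ) 1) ⊆ {y | b'.coord j y = 0} := by
      refine closure_minimal ?_ (hcl j)
      rintro _ ⟨r, hr, rfl⟩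
      exact hall r hr
    exact h3 (h2 ⟨s, hs, rfl⟩)
  have z0 := hIcc 0 (by simp)
  have z1 := hIcc 1 (by simp)
  have y0 : ψ 0 = b (i + 1) := by simp [hψ]
  have y1 : ψ 1 = b (i + 2) := by simp [hψ]
  rw [y0, hlab] at z0
  rw [y1, hlab] at z1
  rcases fin3_cases i j with rfl | rfl | rfl
  · exact hj
  · rw [b'.coord_apply_eq] at z0; exact absurd z0 one_ne_zero
  · rw [b'.coord_apply_eq] at z1; exact absurd z1 one_ne_zero

lemma edge_mem (b' : AffineBasis (Fin 3) ℝ E2) (i : Fin 3) (y : E2) (h : b'.coord i y = 0) :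
    y ∈ affineSpan ℝ ({b' (i + 1), b' (i + 2)} : Set E2) := by
  rw [mem_affineSpan_pair_iff_exists_lineMap_eq]
  refine ⟨b'.coord (i + 2) y, ?_⟩
  have hs := coord_sum3 b' i y
  rw [h] at hs
  refine b'.ext_elem fun m => ?_
  rw [coord_lineMap b' _ _ _ i]
  rcases fin3_cases i m with rfl | rfl | rfl
  · rw [b'.coord_apply_ne (fin3_n1 m).symm,
      b'.coord_apply_ne (fin3_n2 m).symm, h]; ring
  · rw [b'.coord_apply_eq, b'.coord_apply_ne (fin3_n3 i).symm]; linarith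
  · rw [b'.coord_apply_eq, b'.coord_apply_ne (fin3_n3 i)]; ring

lemma ratio_le (v : Fin 3 → E2) (f : E2 → E2) (x y : E2) (hx : x ∈ Tri v) (hy : y ∈ Tri v)
    (p q : ℝ) (hq : 0 < q) (h1 : dist x y = q) (h2 : p ≤ dist (f x) (f y)) :
    ENNReal.ofReal (p / q) ≤ lipConst v f := by
  have h3 : edist (f x) (f y) / edist x y ≤ lipConst v f := by
    unfold lipConst
    exact le_iSup₂_of_le x hx (le_iSup₂_of_le y hy le_rfl)
  refine le_trans ?_ h3
  rw [edist_dist, edist_dist, h1, ENNReal.ofReal_div_of_pos hq]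
  exact ENNReal.div_le_div_right (ENNReal.ofReal_le_ofReal h2) _

lemma vert_mem (v : Fin 3 → E2) (i : Fin 3) : v i ∈ Tri v := subset_convexHull ℝ _ ⟨i, rfl⟩

lemma low_edge (v v' : Fin 3 → E2) (hg : Good v) (f : E2 → E2) (H : IsLabelHomeo v v' f)
    (i : Fin 3) : ENNReal.ofReal (edgeLen v' i / edgeLen v i) ≤ lipConst v f := by
  refine ratio_le v f (v (i + 1)) (v (i + 2)) (vert_mem _ _) (vert_mem _ _) _ _
    (edge_pos hg i) rfl ?_
  rw [H.2.2.2, H.2.2.2]; rfl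

lemma low_alt (v v' : Fin 3 → E2) (hv : AffineIndependent ℝ v) (hv' : AffineIndependent ℝ v')
    (hg : Good v) (f : E2 → E2) (H : IsLabelHomeo v v' f)
    (i : Fin 3) : ENNReal.ofReal (altLen v' i / altLen v i) ≤ lipConst v f := by
  obtain ⟨F, u, n, a, c, h, K⟩ := exists_frm v hg i
  have ha := K.ha
  have hc := K.hb
  have ht : a / (a + c) ∈ Set.Ioo (0 : ℝ) 1 :=
    ⟨by positivity, by rw [div_lt_one (by positivity)]; linarith⟩
  obtain ⟨b, hb⟩ := Tri_basis v hv
  obtain ⟨b', hb'⟩ := Tri_basis v' hv'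
  obtain rfl : (b : Fin 3 → E2) = v := funext hb
  obtain rfl : (b' : Fin 3 → E2) = v' := funext hb'
  have hF := K.foot
  have e := edge_map b b' f H i _ ht
  rw [← hF] at e
  have hFT : F ∈ Tri b := by
    rw [hF]
    exact (convex_convexHull ℝ _).lineMap_mem (vert_mem _ _) (vert_mem _ _) ⟨ht.1.le, ht.2.le⟩
  refine ratio_le b f (b i) F (vert_mem _ _) hFT _ _ (alt_pos hg i) ?_ ?_
  · rw [K.dist_foot, K.alt]
  · rw [H.2.2.2]
    exact Metric.infDist_le_dist_of_mem (edge_mem b' i _ e)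

lemma low_all (v v' : Fin 3 → E2) (hv : AffineIndependent ℝ v) (hv' : AffineIndependent ℝ v')
    (hg : Good v) (f : E2 → E2) (H : IsLabelHomeo v v' f) :
    ENNReal.ofReal (Mdist v v') ≤ lipConst v f := by
  have e := low_edge v v' hg f H
  have a := low_alt v v' hv hv' hg f H
  have hm : Monotone ENNReal.ofReal := ENNReal.ofReal_mono
  unfold Mdist
  simp only [hm.map_max, max_le_iff]
  exact ⟨⟨⟨e 0, e 1⟩, e 2⟩, ⟨a 0, a 1⟩, a 2⟩

lemma lip_le (v : Fin 3 → E2) (f : E2 → E2) (L : ℝ) (hL : 0 < L)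
    (h : ∀ x y, dist (f x) (f y) ≤ L * dist x y) : lipConst v f ≤ ENNReal.ofReal L := by
  unfold lipConst
  refine iSup₂_le fun x _ => iSup₂_le fun y _ => ?_
  refine ENNReal.div_le_of_le_mul ?_
  rw [edist_dist, edist_dist, ← ENNReal.ofReal_mul hL.le]
  exact ENNReal.ofReal_le_ofReal (h x y)

lemma up_all (v v' : Fin 3 → E2) (hg : Good v) (hg' : Good v') :
    ∃ f, IsLabelHomeo v v' f ∧ lipConst v f ≤ ENNReal.ofReal (Mdist v v') := by
  have hM : ∃ L, L = Mdist v v' := ⟨_, rfl⟩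
  obtain ⟨L, hL⟩ := hM
  have le : (((edgeLen v' 0 / edgeLen v 0 ≤ L ∧ edgeLen v' 1 / edgeLen v 1 ≤ L) ∧
      edgeLen v' 2 / edgeLen v 2 ≤ L) ∧
      (altLen v' 0 / altLen v 0 ≤ L ∧ altLen v' 1 / altLen v 1 ≤ L) ∧
      altLen v' 2 / altLen v 2 ≤ L) := by
    have : Mdist v v' ≤ L := hL.ge
    unfold Mdist at this
    simpa only [max_le_iff] using this
  have eL : ∀ i, edgeLen v' i ≤ L * edgeLen v i := by
    intro i
    rw [← div_le_iff₀ (edge_pos hg i)]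
    fin_cases i
    · exact le.1.1.1
    · exact le.1.1.2
    · exact le.1.2
  have aL : ∀ i, altLen v' i ≤ L * altLen v i := by
    intro i
    rw [← div_le_iff₀ (alt_pos hg i)]
    fin_cases i
    · exact le.2.1.1
    · exact le.2.1.2
    · exact le.2.2
  have L0 : 0 < L := lt_of_lt_of_le (div_pos (edge_pos hg' 0) (edge_pos hg 0)) le.1.1.1
  have hch : (∃ i, L = edgeLen v' i / edgeLen v i) ∨ (∃ i, L = altLen v' i / altLen v i) := by
    rw [hL]
    unfold Mdist
    rcases max_choice (max (max (edgeLen v' 0 / edgeLen v 0) (edgeLen v' 1 / edgeLen v 1))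
        (edgeLen v' 2 / edgeLen v 2))
      (max (max (altLen v' 0 / altLen v 0) (altLen v' 1 / altLen v 1))
        (altLen v' 2 / altLen v 2)) with h | h <;> rw [h]
    · left
      rcases max_choice (max (edgeLen v' 0 / edgeLen v 0) (edgeLen v' 1 / edgeLen v 1))
        (edgeLen v' 2 / edgeLen v 2) with h | h <;> rw [h]
      · rcases max_choice (edgeLen v' 0 / edgeLen v 0) (edgeLen v' 1 / edgeLen v 1) with h | h <;>
          rw [h]
        · exact ⟨0, rfl⟩
        · exact ⟨1, rfl⟩
      · exact ⟨2, rfl⟩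
    · right
      rcases max_choice (max (altLen v' 0 / altLen v 0) (altLen v' 1 / altLen v 1))
        (altLen v' 2 / altLen v 2) with h | h <;> rw [h]
      · rcases max_choice (altLen v' 0 / altLen v 0) (altLen v' 1 / altLen v 1) with h | h <;>
          rw [h]
        · exact ⟨0, rfl⟩
        · exact ⟨1, rfl⟩
      · exact ⟨2, rfl⟩
  rw [← hL]
  rcases hch with ⟨i, hi⟩ | ⟨i, hi⟩
  · rw [eq_div_iff (edge_pos hg i).ne'] at hi
    obtain ⟨f, h1, h2⟩ := lemmaA v v' hg hg' i L L0 hi.symm (aL _) (aL _)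
    exact ⟨f, h1, lip_le v f L L0 h2⟩
  · rw [eq_div_iff (alt_pos hg i).ne'] at hi
    obtain ⟨f, h1, h2⟩ := lemmaB v v' hg hg' i L L0 hi.symm (eL _) (eL _)
    exact ⟨f, h1, lip_le v f L L0 h2⟩


theorem stmt3 (v v' : Fin 3 → E2)
    (hv : AffineIndependent ℝ v) (hv' : AffineIndependent ℝ v')
    (hT : IsAcute v) (hT' : IsAcute v') :
    Lam v v' = ENNReal.ofReal (Mdist v v') ∧
    ∃ f : E2 → E2, IsLabelHomeo v v' f ∧
      lipConst v f = ENNReal.ofReal (Mdist v v') := by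
  have hg := good_of_acute v hT
  have hg' := good_of_acute v' hT'
  obtain ⟨f, h1, h2⟩ := up_all v v' hg hg'
  have low := low_all v v' hv hv' hg
  refine ⟨le_antisymm ?_ ?_, f, h1, le_antisymm h2 (low f h1)⟩
  · exact (iInf₂_le f h1).trans h2
  · exact le_iInf₂ fun f hf => low f hf
end
end

section
/- Let T and T' be labeled triangles in the Euclidean plane having the same area. If Λ(T,T') ≤ 1, then Λ(T,T') = 1 and T and T' are isometric as labeled triangles, i.e. ‖e_i‖ = ‖e'_i‖ for each i ∈ {1,2,3}. -/
open Metric Set ENNReal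

noncomputable section

open MeasureTheory Filter Topology

lemma area_nonincr (T T' : Set E2) (f : E2 → E2) (hT : (μH[2] T : ℝ≥0∞) ≤ μH[2] T') (hfin : (μH[2] T : ℝ≥0∞) ≠ ∞)
    (hsurj : T' ⊆ f '' T) (hlip : ∀ x ∈ T, ∀ y ∈ T, dist (f x) (f y) ≤ dist x y)
    (x y : E2) (r : ℝ) (hr : 0 < r) (hx : ball x r ⊆ T) (hy : ball y r ⊆ T)
    (hd : dist x y = 2 * r) : dist (f x) (f y) = 2 * r := by
  have hxT : x ∈ T := hx (mem_ball_self hr)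
  have hyT : y ∈ T := hy (mem_ball_self hr)
  refine le_antisymm (hd ▸ hlip x hxT y hyT) ?_
  by_contra hlt
  push Not at hlt
  have : Fact (Module.finrank ℝ E2 = 2) := ⟨by simp⟩
  have hH : Measure.IsAddHaarMeasure (μH[2] : Measure E2) := by
    have := MeasureTheory.isAddHaarMeasure_hausdorffMeasure (E := E2)
    simpa using this
  have hL : LipschitzOnWith 1 f T := LipschitzOnWith.of_dist_le_mul (by simpa using hlip)
  have hmono : ∀ A ⊆ T, (μH[2] (f '' A) : ℝ≥0∞) ≤ μH[2] A := by
    intro A hA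
    have := (hL.mono hA).hausdorffMeasure_image_le (d := 2) (by norm_num)
    simpa using this
  have hball : ∀ z ∈ T, ball z r ⊆ T → f '' ball z r ⊆ ball (f z) r := by
    rintro z hz hzT _ ⟨w, hw, rfl⟩
    exact lt_of_le_of_lt (hlip w (hzT hw) z hz) hw
  have hdisj : Disjoint (ball x r) (ball y r) := ball_disjoint_ball (by linarith)
  set β : ℝ≥0∞ := μH[2] (ball (0:E2) r) with hβ
  have hb : ∀ z : E2, (μH[2] (ball z r) : ℝ≥0∞) = β := fun z => Measure.addHaar_ball_center _ z r
  have hβfin : β ≠ ∞ := measure_ball_lt_top.ne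
  set U := ball x r ∪ ball y r with hU
  have hUm : MeasurableSet U := measurableSet_ball.union measurableSet_ball
  have hUT : U ⊆ T := union_subset hx hy
  have hUμ : (μH[2] U : ℝ≥0∞) = β + β := by
    rw [hU, measure_union hdisj measurableSet_ball, hb, hb]
  have h1 : (μH[2] U : ℝ≥0∞) + μH[2] (T \ U) = μH[2] T := by
    rw [add_comm]; nth_rewrite 2 [← inter_eq_right.2 hUT]
    exact measure_sdiff_add_inter _ hUm
  set V := ball (f x) r ∪ ball (f y) r with hV
  have h2 : (μH[2] T' : ℝ≥0∞) ≤ μH[2] V + μH[2] (T \ U) := by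
    calc (μH[2] T' : ℝ≥0∞) ≤ μH[2] (f '' U ∪ f '' (T \ U)) := by
          refine measure_mono ?_
          rw [← image_union, union_sdiff_cancel hUT]; exact hsurj
      _ ≤ μH[2] (f '' U) + μH[2] (f '' (T \ U)) := measure_union_le _ _
      _ ≤ _ := by
          refine add_le_add (measure_mono ?_) (hmono _ sdiff_subset)
          rw [hU, image_union]
          exact union_subset_union (hball x hxT hx) (hball y hyT hy)
  have hdf : (μH[2] (T \ U) : ℝ≥0∞) ≠ ∞ := ne_top_of_le_ne_top hfin (measure_mono sdiff_subset)
  have h3 : β + β ≤ μH[2] V := by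
    have := (h1.le.trans hT).trans h2
    rw [hUμ] at this
    exact (ENNReal.add_le_add_iff_right hdf).1 this
  have h4 : (μH[2] V : ℝ≥0∞) + μH[2] (ball (f x) r ∩ ball (f y) r) = β + β := by
    rw [hV, measure_union_add_inter _ measurableSet_ball, hb, hb]
  have h5 : 0 < (μH[2] (ball (f x) r ∩ ball (f y) r) : ℝ≥0∞) := by
    refine (isOpen_ball.inter isOpen_ball).measure_pos _ ⟨midpoint ℝ (f x) (f y), ?_, ?_⟩
    · rw [mem_ball, dist_midpoint_left]; norm_num; linarith
    · rw [mem_ball, dist_midpoint_right]; norm_num; linarith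
  have h6 : (μH[2] V : ℝ≥0∞) ≠ ∞ := by
    intro h; rw [h, top_add] at h4; exact (ENNReal.add_ne_top.2 ⟨hβfin, hβfin⟩) h4.symm
  have h7 := ENNReal.lt_add_right h6 h5.ne'
  rw [h4] at h7
  exact absurd h3 (not_le.2 h7)

lemma eq_of_norm (u w : E2) (s : ℝ) (hu : ‖u‖ = s) (hw : ‖w‖ = s) (h : ‖u + w‖ = 2 * s) : u = w := by
  have := parallelogram_law_with_norm ℝ u w
  rw [h, hu, hw] at this
  have h0 : ‖u - w‖ * ‖u - w‖ = 0 := by linarith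
  exact sub_eq_zero.1 (norm_eq_zero.1 (mul_self_eq_zero.1 h0))

lemma chain (T : Set E2) (hconv : Convex ℝ T) (f : E2 → E2)
    (hloc : ∀ x y : E2, ∀ r : ℝ, 0 < r → ball x r ⊆ T → ball y r ⊆ T → dist x y = 2 * r →
      dist (f x) (f y) = 2 * r)
    (x y : E2) (r : ℝ) (hr : 0 < r) (hx : ball x r ⊆ T) (hy : ball y r ⊆ T) :
    dist (f x) (f y) = dist x y := by
  rcases eq_or_ne x y with rfl | hxy
  · simp
  have hd : 0 < dist x y := dist_pos.2 hxy
  obtain ⟨n, hn⟩ := exists_nat_gt (dist x y / r)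
  have hnpos : (0:ℝ) < n := lt_trans (by positivity) hn
  set s := dist x y / n with hs
  have hspos : 0 < s := by positivity
  have hsr : s < r := by
    rw [div_lt_iff₀ hr] at hn; rw [hs, div_lt_iff₀ hnpos]; linarith
  set a : ℕ → E2 := fun k => x + ((k:ℝ) / n) • (y - x) with ha
  have hda : ∀ j k : ℕ, dist (a j) (a k) = |(j:ℝ) - k| * s := by
    intro j k
    have : a j - a k = (((j:ℝ) - k) / n) • (y - x) := by
      simp only [ha]; module
    rw [dist_eq_norm, this, norm_smul, hs, dist_comm x y, dist_eq_norm y x, Real.norm_eq_abs, abs_div,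
      abs_of_pos hnpos]
    ring
  have hball : ∀ k ≤ n, ball (a k) r ⊆ T := by
    intro k hk z hz
    have h1 : x + (z - a k) ∈ T := hx (by rw [mem_ball, dist_eq_norm] at *; simpa using hz)
    have h2 : y + (z - a k) ∈ T := hy (by rw [mem_ball, dist_eq_norm] at *; simpa using hz)
    have hk1 : (k:ℝ) / n ≤ 1 := by rw [div_le_one hnpos]; exact_mod_cast hk
    have := hconv h1 h2 (a := 1 - (k:ℝ)/n) (b := (k:ℝ)/n) (by linarith) (by positivity) (by ring)
    convert this using 1
    simp only [ha]; module
  have hstep : ∀ j k : ℕ, j ≤ n → k ≤ n → j ≠ k → |(j:ℝ) - k| ≤ 2 →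
      dist (f (a j)) (f (a k)) = |(j:ℝ) - k| * s := by
    intro j k hj hk hjk hle
    have hp : 0 < |(j:ℝ) - k| := abs_pos.2 (sub_ne_zero.2 (by exact_mod_cast hjk))
    have hle' : |(j:ℝ) - k| * s / 2 ≤ r := by nlinarith
    have := hloc (a j) (a k) (|(j:ℝ) - k| * s / 2) (by positivity)
      ((ball_subset_ball hle').trans (hball j hj)) ((ball_subset_ball hle').trans (hball k hk))
      (by rw [hda]; ring)
    rw [this]; ring
  have hn1 : 1 ≤ n := by exact_mod_cast hnpos
  have hone : ∀ k, k + 1 ≤ n → ‖f (a (k+1)) - f (a k)‖ = s := by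
    intro k hk
    have := hstep (k+1) k hk (by omega) (by omega) (by norm_num)
    rw [dist_eq_norm] at this; rw [this]; norm_num
  have hdiff : ∀ k, k + 1 ≤ n → f (a (k+1)) - f (a k) = f (a 1) - f (a 0) := by
    intro k
    induction k with
    | zero => intro _; simp
    | succ k ih =>
      intro hk
      rw [← ih (by omega)]
      refine eq_of_norm _ _ s (hone _ hk) (hone _ (by omega)) ?_
      have := hstep (k+2) k hk (by omega) (by omega) (by norm_num)
      rw [dist_eq_norm] at this
      rw [sub_add_sub_cancel, this]; norm_num
  have hsum : ∀ k, k ≤ n → f (a k) - f (a 0) = (k:ℝ) • (f (a 1) - f (a 0)) := by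
    intro k
    induction k with
    | zero => intro _; simp
    | succ k ih =>
      intro hk
      rw [← sub_add_sub_cancel _ (f (a k)), ih (by omega), hdiff k hk]
      push_cast; module
  have h0 : a 0 = x := by simp [ha]
  have hN : a n = y := by simp [ha, hnpos.ne']
  have := hsum n le_rfl
  rw [h0, hN] at this
  rw [dist_comm, dist_eq_norm, this, norm_smul, ← h0, hone 0 hn1]
  rw [Real.norm_eq_abs, abs_of_pos hnpos, hs, h0]; field_simp

open MeasureTheory Filter Topology
open scoped Pointwise

def Dt (v : Fin 3 → E2) : ℝ :=
  (v 1 0 - v 0 0) * (v 2 1 - v 0 1) - (v 2 0 - v 0 0) * (v 1 1 - v 0 1)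

lemma haarH : Measure.IsAddHaarMeasure (μH[2] : Measure E2) := by
  have := MeasureTheory.isAddHaarMeasure_hausdorffMeasure (E := E2)
  simpa using this

def stdv : Fin 3 → E2 := ![!₂[0, 0], !₂[1, 0], !₂[0, 1]]

lemma measure_tri (v : Fin 3 → E2) :
    (μH[2] (Tri v) : ℝ≥0∞) = ENNReal.ofReal |Dt v| * μH[2] (Tri stdv) := by
  have := haarH
  let M : Matrix (Fin 2) (Fin 2) ℝ := !![v 1 0 - v 0 0, v 2 0 - v 0 0; v 1 1 - v 0 1, v 2 1 - v 0 1]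
  let L : E2 →ₗ[ℝ] E2 := Matrix.toEuclideanLin M
  have hdet : LinearMap.det L = Dt v := by
    simp only [L, Matrix.toLpLin_eq_toLin, LinearMap.det_toLin]
    simp [M, Matrix.det_fin_two, Dt]
  have hv : v = fun i => v 0 + L (stdv i) := by
    funext i
    ext j
    fin_cases i <;> fin_cases j <;>
      simp [L, M, stdv, Matrix.toEuclideanLin]
  have himg : Tri v = (fun x => v 0 + x) '' (L '' Tri stdv) := by
    unfold Tri
    rw [L.image_convexHull]
    have h1 : (fun x => v 0 + x) '' ((convexHull ℝ) (L '' range stdv)) =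
        v 0 +ᵥ ((convexHull ℝ) (L '' range stdv)) := rfl
    rw [h1, ← convexHull_vadd]
    congr 1
    conv_lhs => rw [hv]
    ext z
    simp [Set.mem_vadd_set]
  rw [himg]
  rw [image_add_left, measure_preimage_add, Measure.addHaar_image_linearMap, hdet]

lemma norm2 (u : E2) : ‖u‖ = √(u 0 ^ 2 + u 1 ^ 2) := by
  rw [EuclideanSpace.norm_eq, Fin.sum_univ_two]; simp

lemma triArea_eq (v : Fin 3 → E2) (hv : AffineIndependent ℝ v) : triArea v = |Dt v| / 2 := by
  have hne : v 2 ≠ v 1 := fun h => absurd (hv.injective h) (by decide)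
  unfold triArea edgeLen altLen
  congr 1
  simp only [zero_add]
  set e := dist (v 1) (v 2) with he
  have hepos : 0 < e := dist_pos.2 hne.symm
  have hesq : e ^ 2 = (v 2 0 - v 1 0) ^ 2 + (v 2 1 - v 1 1) ^ 2 := by
    rw [he, dist_comm, dist_eq_norm, norm2, Real.sq_sqrt (by positivity)]; simp
  have key : Metric.infDist (v 0) (line[ℝ, v 1, v 2] : Set E2) = |Dt v| / e := by
    apply le_antisymm
    · set t : ℝ := ((v 0 0 - v 1 0) * (v 2 0 - v 1 0) + (v 0 1 - v 1 1) * (v 2 1 - v 1 1)) / e ^ 2 with ht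
      have hmem : AffineMap.lineMap (v 1) (v 2) t ∈ (line[ℝ, v 1, v 2] : Set E2) :=
        AffineMap.lineMap_mem_affineSpan_pair t _ _
      refine (Metric.infDist_le_dist_of_mem hmem).trans (le_of_eq ?_)
      rw [dist_eq_norm, norm2, ← Real.sqrt_sq (show 0 ≤ |Dt v| / e by positivity)]
      congr 1
      rw [div_pow, sq_abs, _root_.eq_div_iff (by positivity)]
      have ht' : t * e ^ 2 = ((v 0 0 - v 1 0) * (v 2 0 - v 1 0) + (v 0 1 - v 1 1) * (v 2 1 - v 1 1)) := by
        rw [ht]; field_simp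
      simp only [AffineMap.lineMap_apply, vsub_eq_sub, vadd_eq_add, PiLp.sub_apply, PiLp.add_apply,
        PiLp.smul_apply, smul_eq_mul]
      unfold Dt
      clear_value t
      clear ht hmem
      rw [hesq] at *
      generalize v 0 0 = a at *
      generalize v 0 1 = b at *
      generalize v 1 0 = c at *
      generalize v 1 1 = d at *
      generalize v 2 0 = p at *
      generalize v 2 1 = q at *
      linear_combination (t * ((p - c)^2 + (q-d)^2) - ((a - c) * (p - c) + (b - d) * (q - d))) * ht'
    · refine (Metric.le_infDist ⟨v 1, left_mem_affineSpan_pair ℝ _ _⟩).2 ?_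
      intro p hp
      obtain ⟨t, rfl⟩ := mem_affineSpan_pair_iff_exists_lineMap_eq.1 hp
      rw [div_le_iff₀ hepos]
      apply abs_le_of_sq_le_sq _ (by positivity)
      rw [mul_pow, hesq, dist_eq_norm, norm2, Real.sq_sqrt (by positivity)]
      simp only [AffineMap.lineMap_apply, vsub_eq_sub, vadd_eq_add, PiLp.sub_apply, PiLp.add_apply,
        PiLp.smul_apply, smul_eq_mul]
      unfold Dt
      generalize v 0 0 = a at *
      generalize v 0 1 = b at *
      generalize v 1 0 = c at *
      generalize v 1 1 = d at *
      generalize v 2 0 = p at *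
      generalize v 2 1 = q at *
      nlinarith [sq_nonneg ((a - (t * (p - c) + c)) * (p - c) + (b - (t * (q - d) + d)) * (q - d))]
  rw [key]; field_simp

open MeasureTheory Filter Topology
lemma tri_compact (v : Fin 3 → E2) : IsCompact (Tri v) :=
  (Set.finite_range v).isCompact_convexHull (𝕜 := ℝ)

lemma lip_of_lipConst (v : Fin 3 → E2) (f : E2 → E2) (c : ℝ) (hc : 0 ≤ c)
    (h : lipConst v f ≤ ENNReal.ofReal c) :
    ∀ x ∈ Tri v, ∀ y ∈ Tri v, dist (f x) (f y) ≤ c * dist x y := by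
  intro x hx y hy
  rcases eq_or_ne x y with rfl | hxy
  · simp
  have h1 : edist (f x) (f y) / edist x y ≤ ENNReal.ofReal c := by
    refine le_trans ?_ h
    unfold lipConst
    exact le_iSup₂_of_le x hx (le_iSup₂_of_le y hy le_rfl)
  rw [ENNReal.div_le_iff (by simpa using hxy) (edist_ne_top _ _), edist_dist, edist_dist,
    ← ENNReal.ofReal_mul hc, ENNReal.ofReal_le_ofReal_iff (by positivity)] at h1
  exact h1

lemma exists_limit (v v' : Fin 3 → E2) (h : Lam v v' ≤ 1) :
    ∃ f : E2 → E2, (∀ x ∈ Tri v, ∀ y ∈ Tri v, dist (f x) (f y) ≤ dist x y) ∧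
      Tri v' ⊆ f '' Tri v ∧ ∀ i, f (v i) = v' i := by
  have hex : ∀ n : ℕ, ∃ f : E2 → E2, IsLabelHomeo v v' f ∧
      ∀ x ∈ Tri v, ∀ y ∈ Tri v, dist (f x) (f y) ≤ (1 + 1 / ((n:ℝ) + 1)) * dist x y := by
    intro n
    have hlt : Lam v v' < ENNReal.ofReal (1 + 1 / ((n:ℝ) + 1)) := by
      refine h.trans_lt ?_
      rw [← ENNReal.ofReal_one, ENNReal.ofReal_lt_ofReal_iff (by positivity)]
      have : 0 < 1 / ((n:ℝ) + 1) := by positivity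
      linarith
    unfold Lam at hlt
    simp only [iInf_lt_iff] at hlt
    obtain ⟨f, hf, hl⟩ := hlt
    exact ⟨f, hf, lip_of_lipConst v f _ (by positivity) hl.le⟩
  choose F hF hL using hex
  let U : Ultrafilter ℕ := hyperfilter ℕ
  have hU : (U : Filter ℕ) ≤ atTop := by rw [← Nat.cofinite_eq_atTop]; exact hyperfilter_le_cofinite
  have hlim : ∀ (w : Fin 3 → E2) (u : ℕ → E2), (∀ n, u n ∈ Tri w) →
      ∃ z ∈ Tri w, Tendsto u U (𝓝 z) := by
    intro w u hu
    have := (tri_compact w).ultrafilter_le_nhds (U.map u) (by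
      rw [le_principal_iff]
      exact Filter.Eventually.of_forall (f := (U : Filter ℕ)) hu)
    exact this
  have hc : Tendsto (fun n : ℕ => 1 + 1 / ((n:ℝ) + 1)) U (𝓝 1) := by
    have := (tendsto_one_div_add_atTop_nhds_zero_nat (𝕜 := ℝ)).const_add 1
    rw [add_zero] at this
    exact this.mono_left hU
  have hpt : ∀ x : E2, ∃ z, x ∈ Tri v → Tendsto (fun n => F n x) U (𝓝 z) := by
    intro x
    by_cases hx : x ∈ Tri v
    · obtain ⟨z, _, hz⟩ := hlim v' (fun n => F n x) (fun n => (hF n).2.1.mapsTo hx)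
      exact ⟨z, fun _ => hz⟩
    · exact ⟨0, fun h => absurd h hx⟩
  choose f hf using hpt
  refine ⟨f, ?_, ?_, ?_⟩
  · intro x hx y hy
    have h1 := (hf x hx).dist (hf y hy)
    have h2 := hc.mul_const (dist x y)
    rw [one_mul] at h2
    exact le_of_tendsto_of_tendsto' h1 h2 (fun n => hL n x hx y hy)
  · intro y hy
    have : ∀ n, ∃ x ∈ Tri v, F n x = y := fun n => (hF n).2.1.surjOn hy
    choose u hu huy using this
    obtain ⟨x, hx, hux⟩ := hlim v u hu
    refine ⟨x, hx, ?_⟩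
    have h1 := (hf x hx).dist (tendsto_const_nhds (x := y))
    have h2 := hc.mul ((tendsto_const_nhds (x := x)).dist hux)
    rw [dist_self, mul_zero] at h2
    have := le_of_tendsto_of_tendsto' h1 h2 (fun n => by
      have := hL n x hx (u n) (hu n)
      rwa [huy] at this)
    exact dist_le_zero.1 this
  · intro i
    have hi : v i ∈ Tri v := subset_convexHull ℝ _ (mem_range_self i)
    refine tendsto_nhds_unique (hf _ hi) ?_
    simp only [(hF _).2.2.2 i]
    exact tendsto_const_nhds

lemma iso_edges (v v' : Fin 3 → E2)
    (hv : AffineIndependent ℝ v) (hv' : AffineIndependent ℝ v')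
    (harea : triArea v = triArea v')
    (h : Lam v v' ≤ 1) (i j : Fin 3) : dist (v i) (v j) = dist (v' i) (v' j) := by
  obtain ⟨f, hlip, hsurj, hvert⟩ := exists_limit v v' h
  have hconv : Convex ℝ (Tri v) := convex_convexHull ℝ _
  have hmem : ∀ i, v i ∈ Tri v := fun i => subset_convexHull ℝ _ (mem_range_self i)
  have hHa := haarH
  have hfin : (μH[2] (Tri v) : ℝ≥0∞) ≠ ∞ := (tri_compact v).measure_lt_top.ne
  have hle : (μH[2] (Tri v) : ℝ≥0∞) ≤ μH[2] (Tri v') := by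
    rw [triArea_eq v hv, triArea_eq v' hv'] at harea
    rw [measure_tri v, measure_tri v', show |Dt v| = |Dt v'| by linarith]
  have hiso := chain (Tri v) hconv f (area_nonincr (Tri v) (Tri v') f hle hfin hsurj hlip)
  have hinterior : (interior (Tri v)).Nonempty := by
    unfold Tri
    rw [interior_convexHull_nonempty_iff_affineSpan_eq_top,
      hv.affineSpan_eq_top_iff_card_eq_finrank_add_one]
    simp
  obtain ⟨c, hc⟩ := hinterior
  obtain ⟨ρ, hρ, hball⟩ := Metric.mem_nhds_iff.1 (mem_interior_iff_mem_nhds.1 hc)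
  have hcT : c ∈ Tri v := hball (mem_ball_self hρ)
  rw [← hvert i, ← hvert j]
  refine le_antisymm ?_ (hlip _ (hmem i) _ (hmem j))
  let p : Fin 3 → ℝ → E2 := fun k t => v k + t • (c - v k)
  have hp : ∀ k t, 0 < t → t ≤ 1 → ball (p k t) (t * ρ) ⊆ Tri v := by
    intro k t ht ht1 z hz
    have h1 : c + t⁻¹ • (z - p k t) ∈ Tri v := by
      apply hball
      rw [mem_ball, dist_eq_norm] at hz ⊢
      rw [add_sub_cancel_left, norm_smul, Real.norm_eq_abs, abs_of_pos (inv_pos.2 ht),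
        inv_mul_lt_iff₀ ht]
      exact hz
    have := hconv (hmem k) h1 (a := 1 - t) (b := t) (by linarith) ht.le (by ring)
    convert this using 1
    rw [smul_add, smul_inv_smul₀ ht.ne']
    simp only [p]; module
  have hpv : ∀ k t, 0 < t → t ≤ 1 → dist (f (p k t)) (f (v k)) ≤ t * dist c (v k) := by
    intro k t ht ht1
    refine (hlip _ (hp k t ht ht1 (mem_ball_self (by positivity))) _ (hmem k)).trans (le_of_eq ?_)
    simp only [p]
    rw [dist_eq_norm, add_sub_cancel_left, norm_smul, Real.norm_eq_abs, abs_of_pos ht, dist_eq_norm]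
  have hmain : ∀ t, 0 < t → t ≤ 1 → (1 - t) * dist (v i) (v j) ≤
      dist (f (v i)) (f (v j)) + t * (dist c (v i) + dist c (v j)) := by
    intro t ht ht1
    have h1 := hiso (p i t) (p j t) (t * ρ) (by positivity) (hp i t ht ht1) (hp j t ht ht1)
    have h2 : dist (p i t) (p j t) = (1 - t) * dist (v i) (v j) := by
      have : p i t - p j t = (1 - t) • (v i - v j) := by simp only [p]; module
      rw [dist_eq_norm, this, norm_smul, Real.norm_eq_abs, abs_of_nonneg (by linarith), dist_eq_norm]
    have h3 := dist_triangle4 (f (p i t)) (f (v i)) (f (v j)) (f (p j t))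
    have h4 := hpv i t ht ht1
    have h5 := hpv j t ht ht1
    rw [dist_comm] at h5
    rw [← h2, ← h1]; linarith
  set C := dist c (v i) + dist c (v j) + dist (v i) (v j) with hC
  have hC0 : 0 ≤ C := by positivity
  refine le_of_forall_pos_le_add fun ε hε => ?_
  have h1 := hmain (min 1 (ε / (C + 1))) (by positivity) (min_le_left _ _)
  have h2 : min 1 (ε / (C + 1)) * C ≤ ε := by
    calc _ ≤ ε / (C + 1) * C := by gcongr; exact min_le_right _ _
      _ ≤ ε := by rw [div_mul_eq_mul_div, div_le_iff₀ (by positivity)]; nlinarith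
  rw [hC] at h2 h1
  linarith

theorem stmt6 (v v' : Fin 3 → E2)
    (hv : AffineIndependent ℝ v) (hv' : AffineIndependent ℝ v')
    (harea : triArea v = triArea v')
    (h : Lam v v' ≤ 1) :
    Lam v v' = 1 ∧ ∀ i, edgeLen v i = edgeLen v' i := by
  have hd := iso_edges v v' hv hv' harea h
  refine ⟨le_antisymm h ?_, fun i => hd _ _⟩
  unfold Lam
  refine le_iInf₂ fun f hf => ?_
  have hmem : ∀ i, v i ∈ Tri v := fun i => subset_convexHull ℝ _ (mem_range_self i)
  have hne : v 0 ≠ v 1 := fun h => absurd (hv.injective h) (by decide)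
  unfold lipConst
  refine le_iSup₂_of_le (v 0) (hmem 0) (le_iSup₂_of_le (v 1) (hmem 1) ?_)
  rw [hf.2.2.2 0, hf.2.2.2 1, edist_dist, edist_dist, hd 0 1, ENNReal.div_self]
  · rw [← hd 0 1]; simpa using hne
  · exact ENNReal.ofReal_ne_top
end
end
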